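/- For a finite set Ξ ⊂ F² of distinct points and the lexicographic order, the degree reducing interpolation space spanned by monomials is unique; consequently Span_F{x^i y^j : (i,j) ∈ S_x(Ξ)} equals the canonical space P_≺lex(Ξ) spanned by the Gröbner éscalier of I(Ξ), and hence {x^i y^j : (i,j) ∈ S_x(Ξ)} = N_≺lex(I(Ξ)). -/

import Mathlib

/-!
Everything rests on comparing a set of exponents with the set of leading exponents of `I(Ξ)`.

*Uniqueness.* If `A` is degree reducing, then `A` is exactly the complement of the set of leading
exponents of `I(Ξ)` (`mem_iff_of_isDegreeReducingLex`), and this complement does not depend on `A`.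
Indeed, if `x^i y^j` with `(i, j) ∈ A` were the leading monomial of some `g ∈ I(Ξ)`, the
interpolant `x^i y^j` of `x^i y^j - g / lc(g)` would have too large a degree. If `(i, j) ∉ A`, then
`x^i y^j` minus its interpolant lies in `I(Ξ)` and has leading exponent `(i, j)`.

*The éscalier.* Counting rows gives `(i, j) ∈ S ↔ j < #{b | row b of Ξ has more than i points}`
(`mem_iff_lt_card_bigRows`). A bivariate polynomial is regarded as a polynomial in `x` over `F[y]`
(`toPoly`); its lex-leading exponent consists of its degree in `x` and the degree of its leading
coefficient `c(y)`. If `g ∈ I(Ξ)` has leading exponent `(i, j)`, then for every row `b` with more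
than `i` points the polynomial `g(x, b)`, of degree at most `i`, vanishes identically, so `c(b) = 0`;
as `c ≠ 0` has degree `j`, there are at most `j` such rows. Conversely, the product of
`∏ (y - b)`, over the rows with more than `i` points, and a polynomial monic of degree `i` in `x`
that vanishes on all the remaining rows (obtained by Lagrange interpolation in `y`) is an element of
`I(Ξ)` whose leading exponent is `(i, #{b | row b of Ξ has more than i points})`.
-/

open MvPolynomial Finset

/-- A finite subset of ℕ² closed under componentwise decrease. -/
def IsLowerSet2 (A : Finset (ℕ × ℕ)) : Prop :=
  ∀ a ∈ A, ∀ b : ℕ × ℕ, b.1 ≤ a.1 → b.2 ≤ a.2 → b ∈ A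

/-- `Ξ` is `A`-cartesian: `Ξ = {(x i, y j) : (i,j) ∈ A}` for a lower set `A`,
with distinct `x i`'s and distinct `y j`'s (on the relevant indices). -/
def IsCartesianWith {F : Type*} [Field F] [DecidableEq F] (A : Finset (ℕ × ℕ)) (Ξ : Finset (F × F)) : Prop :=
  IsLowerSet2 A ∧ ∃ x y : ℕ → F,
    Set.InjOn x {i | ∃ j, (i, j) ∈ A} ∧ Set.InjOn y {j | ∃ i, (i, j) ∈ A} ∧
    Ξ = A.image fun ij => (x ij.1, y ij.2)

/-- `Ξ` is cartesian. -/
def IsCartesian {F : Type*} [Field F] [DecidableEq F] (Ξ : Finset (F × F)) : Prop :=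
  ∃ A, IsCartesianWith A Ξ

/-- Multiset of numbers of points of `Ξ` on the horizontal lines meeting `Ξ`. -/
def rowCounts {F : Type*} [Field F] [DecidableEq F] (Ξ : Finset (F × F)) : Multiset ℕ :=
  (Ξ.image Prod.snd).val.map fun b => (Ξ.filter fun p => p.2 = b).card

/-- Multiset of numbers of points of `Ξ` on the vertical lines meeting `Ξ`. -/
def colCounts {F : Type*} [Field F] [DecidableEq F] (Ξ : Finset (F × F)) : Multiset ℕ :=
  (Ξ.image Prod.fst).val.map fun a => (Ξ.filter fun p => p.1 = a).card

/-- Multiset of row lengths of a finite subset of ℕ². -/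
def rowCountsA (A : Finset (ℕ × ℕ)) : Multiset ℕ :=
  (A.image Prod.snd).val.map fun j => (A.filter fun p => p.2 = j).card

/-- Multiset of column heights of a finite subset of ℕ². -/
def colCountsA (A : Finset (ℕ × ℕ)) : Multiset ℕ :=
  (A.image Prod.fst).val.map fun i => (A.filter fun p => p.1 = i).card

/-- `A` is the lower set `S_x(Ξ)` obtained by covering `Ξ` by horizontal lines
ordered by (nonincreasing) numbers of points: a lower set whose rows have
exactly the same lengths as the horizontal sections of `Ξ`. -/
def IsSx {F : Type*} [Field F] [DecidableEq F] (Ξ : Finset (F × F)) (A : Finset (ℕ × ℕ)) : Prop :=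
  IsLowerSet2 A ∧ rowCountsA A = rowCounts Ξ

/-- `A` is the lower set `S_y(Ξ)` obtained by covering `Ξ` by vertical lines. -/
def IsSy {F : Type*} [Field F] [DecidableEq F] (Ξ : Finset (F × F)) (A : Finset (ℕ × ℕ)) : Prop :=
  IsLowerSet2 A ∧ colCountsA A = colCounts Ξ

/-- Evaluation of a bivariate polynomial at a point of `F²`. -/
noncomputable def evalAt {F : Type*} [Field F] (ξ : F × F) (p : MvPolynomial (Fin 2) F) : F :=
  MvPolynomial.eval ![ξ.1, ξ.2] p

/-- The span of the monomials `x^i y^j`, `(i,j) ∈ A`. -/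
noncomputable def monSpan (F : Type*) [Field F] (A : Finset (ℕ × ℕ)) :
    Submodule F (MvPolynomial (Fin 2) F) :=
  Submodule.span F ((fun ij : ℕ × ℕ => (X 0 : MvPolynomial (Fin 2) F) ^ ij.1 * X 1 ^ ij.2) '' A)

/-- The interpolation scheme `(Ξ, A)` is regular: every data on `Ξ` is matched by a
unique element of the span of the monomials indexed by `A`. -/
def IsRegularScheme {F : Type*} [Field F] (Ξ : Finset (F × F)) (A : Finset (ℕ × ℕ)) : Prop :=
  ∀ f : F × F → F, ∃! p : MvPolynomial (Fin 2) F,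
    p ∈ monSpan F A ∧ ∀ ξ ∈ Ξ, evalAt ξ p = f ξ

/-- The ideal of polynomials vanishing on `Ξ`. -/
noncomputable def vanishingIdeal (F : Type*) [Field F] (Ξ : Finset (F × F)) :
    Ideal (MvPolynomial (Fin 2) F) :=
  ⨅ ξ ∈ Ξ, RingHom.ker (MvPolynomial.eval ![(ξ : F × F).1, ξ.2])

/-- The `≺_lex`-leading exponent (x-exponent compared first), `⊥` for the zero polynomial. -/
noncomputable def lexDeg {F : Type*} [Field F] (p : MvPolynomial (Fin 2) F) :
    WithBot (ℕ ×ₗ ℕ) :=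
  (p.support.image fun d => toLex (d 0, d 1)).max

/-- A finite exponent set `A` spans a degree reducing interpolation space for `Ξ`
w.r.t. `≺_lex`: the scheme `(Ξ, A)` is regular and interpolation from the span of
the monomials indexed by `A` does not increase the lex-leading exponent. -/
def IsDegreeReducingLex {F : Type*} [Field F] (Ξ : Finset (F × F))
    (A : Finset (ℕ × ℕ)) : Prop :=
  IsRegularScheme Ξ A ∧
    ∀ q p : MvPolynomial (Fin 2) F, p ∈ monSpan F A →
      (∀ ξ ∈ Ξ, evalAt ξ p = evalAt ξ q) → lexDeg p ≤ lexDeg q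

/-! ### Exponents and coefficients -/

/-- The exponent vector of `x^i y^j`. -/
noncomputable def expo (i j : ℕ) : Fin 2 →₀ ℕ := Finsupp.single 0 i + Finsupp.single 1 j

@[simp] lemma expo_zero (i j : ℕ) : expo i j 0 = i := by simp [expo]

@[simp] lemma expo_one (i j : ℕ) : expo i j 1 = j := by simp [expo]

lemma expo_eta (d : Fin 2 →₀ ℕ) : expo (d 0) (d 1) = d := by
  ext k; fin_cases k <;> simp

lemma expo_inj {i j k l : ℕ} (h : expo i j = expo k l) : (i, j) = (k, l) := by
  have h0 := DFunLike.congr_fun h 0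
  have h1 := DFunLike.congr_fun h 1
  simp at h0 h1
  simp [h0, h1]

lemma monomial_expo {F : Type*} [Field F] (i j : ℕ) :
    (X 0 : MvPolynomial (Fin 2) F) ^ i * X 1 ^ j = monomial (expo i j) 1 := by
  simp [expo, X_pow_eq_monomial, monomial_mul]

/-- `(i, j)` is the lex-leading exponent of some (nonzero) element of the vanishing ideal. -/
def IsLeadExp {F : Type*} [Field F] (Ξ : Finset (F × F)) (i j : ℕ) : Prop :=
  ∃ g : MvPolynomial (Fin 2) F, (∀ ξ ∈ Ξ, evalAt ξ g = 0) ∧ expo i j ∈ g.support ∧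
    ∀ e ∈ g.support, toLex ((e 0 : ℕ), (e 1 : ℕ)) ≤ toLex (i, j)

lemma mem_vanishingIdeal {F : Type*} [Field F] {Ξ : Finset (F × F)}
    {g : MvPolynomial (Fin 2) F} : g ∈ vanishingIdeal F Ξ ↔ ∀ ξ ∈ Ξ, evalAt ξ g = 0 := by
  simp [_root_.vanishingIdeal, evalAt, RingHom.mem_ker]

/-! ### Uniqueness -/

lemma support_of_mem_monSpan {F : Type*} [Field F] {A : Finset (ℕ × ℕ)}
    {p : MvPolynomial (Fin 2) F} (hp : p ∈ monSpan F A) :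
    ∀ d ∈ p.support, (d 0, d 1) ∈ A := by
  classical
  induction hp using Submodule.span_induction with
  | mem q hq =>
    obtain ⟨⟨i, j⟩, hij, rfl⟩ := hq
    intro d hd
    simp only [monomial_expo] at hd
    have := Finset.mem_singleton.1 (support_monomial_subset hd)
    subst this
    simpa using hij
  | zero => simp
  | add p q _ _ hp hq =>
    intro d hd
    rcases Finset.mem_union.1 (support_add hd) with h | h
    exacts [hp d h, hq d h]
  | smul c p _ hp => exact fun d hd => hp d (support_smul hd)

lemma le_lexDeg {F : Type*} [Field F] {p : MvPolynomial (Fin 2) F} {d : Fin 2 →₀ ℕ}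
    (hd : d ∈ p.support) : ((toLex (d 0, d 1) : ℕ ×ₗ ℕ) : WithBot (ℕ ×ₗ ℕ)) ≤ lexDeg p :=
  Finset.le_max (Finset.mem_image_of_mem _ hd)

lemma lexDeg_monomial {F : Type*} [Field F] (i j : ℕ) :
    lexDeg (monomial (expo i j) (1 : F)) = ((toLex (i, j) : ℕ ×ₗ ℕ) : WithBot (ℕ ×ₗ ℕ)) := by
  classical
  simp [lexDeg, support_monomial]

/-- A degree reducing set of exponents is the complement of the set of leading exponents of the
vanishing ideal. -/
lemma mem_iff_of_isDegreeReducingLex {F : Type*} [Field F] {Ξ : Finset (F × F)}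
    {A : Finset (ℕ × ℕ)} (hA : IsDegreeReducingLex Ξ A) (i j : ℕ) :
    (i, j) ∈ A ↔ ¬ IsLeadExp Ξ i j := by
  classical
  constructor
  · rintro hij ⟨g, hg, hd, hmax⟩
    set c := coeff (expo i j) g with hc
    have hc0 : c ≠ 0 := mem_support_iff.1 hd
    have h := hA.2 (monomial (expo i j) 1 - C c⁻¹ * g) (monomial (expo i j) 1)
      (by rw [← monomial_expo]; exact Submodule.subset_span ⟨(i, j), hij, rfl⟩)
      (fun ξ hξ => by have := hg ξ hξ; simp only [evalAt] at this ⊢; simp [this])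
    rw [lexDeg_monomial] at h
    -- the maximum defining `lexDeg` is attained at some exponent `d ≥ (i, j)` of the difference
    obtain ⟨b, hb⟩ := WithBot.ne_bot_iff_exists.1 (ne_bot_of_le_ne_bot WithBot.coe_ne_bot h)
    rw [← hb, WithBot.coe_le_coe] at h
    obtain ⟨d, hds, rfl⟩ := Finset.mem_image.1 (Finset.mem_of_max hb.symm)
    have hdc : coeff d (monomial (expo i j) 1 - C c⁻¹ * g) ≠ 0 := mem_support_iff.1 hds
    by_cases hdij : expo i j = d
    · subst hdij
      simp [coeff_C_mul, ← hc, hc0] at hdc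
    · have hdg : d ∈ g.support := by
        rw [mem_support_iff]
        intro h0
        simp [coeff_C_mul, coeff_monomial, hdij, h0] at hdc
      have heq := le_antisymm (hmax d hdg) h
      have heq' : (d 0, d 1) = (i, j) := toLex.injective heq
      simp only [Prod.mk.injEq] at heq'
      exact hdij (by rw [← heq'.1, ← heq'.2, expo_eta])
  · intro hn
    by_contra hij
    apply hn
    obtain ⟨p, ⟨hpA, hpe⟩, -⟩ := hA.1 fun ξ => evalAt ξ (monomial (expo i j) (1 : F))
    have hdeg := hA.2 _ p hpA hpe
    rw [lexDeg_monomial] at hdeg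
    have hp0 : coeff (expo i j) p = 0 := by
      by_contra h0
      exact hij (by simpa using support_of_mem_monSpan hpA _ (mem_support_iff.2 h0))
    refine ⟨monomial (expo i j) 1 - p, fun ξ hξ => ?_, ?_, fun e he => ?_⟩
    · have := hpe ξ hξ
      simp only [evalAt] at this ⊢
      rw [map_sub, this, sub_self]
    · simp [mem_support_iff, hp0]
    · rcases Finset.mem_union.1 (support_sub _ _ _ he) with h | h
      · have := Finset.mem_singleton.1 (support_monomial_subset h)
        subst this
        simp
      · exact WithBot.coe_le_coe.1 ((le_lexDeg h).trans hdeg)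

/-! ### Row counts -/

lemma mem_iff_lt_card_of_lower {T : Finset ℕ} (hT : ∀ n ∈ T, ∀ m ≤ n, m ∈ T) (n : ℕ) :
    n ∈ T ↔ n < T.card := by
  constructor
  · intro hn
    have : Finset.range (n + 1) ⊆ T := fun m hm =>
      hT n hn m (Nat.lt_succ_iff.1 (Finset.mem_range.1 hm))
    simpa using Finset.card_le_card this
  · intro hn
    by_contra hnT
    have : T ⊆ Finset.range n := fun m hm =>
      Finset.mem_range.2 (by by_contra h; exact hnT (hT m hm n (by omega)))
    have := Finset.card_le_card this
    simp at this
    omega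

/-- The ordinates of the horizontal lines containing more than `i` points of `Ξ`. -/
def bigRows {F : Type*} [Field F] [DecidableEq F] (Ξ : Finset (F × F)) (i : ℕ) : Finset F :=
  (Ξ.image Prod.snd).filter fun b => i < (Ξ.filter fun p => p.2 = b).card

/-- The column of `S_x(Ξ)` over `i` has height the number of rows of `Ξ` with more than `i`
points. -/
lemma mem_iff_lt_card_bigRows {F : Type*} [Field F] [DecidableEq F] {Ξ : Finset (F × F)}
    {S : Finset (ℕ × ℕ)} (hS : IsSx Ξ S) (i j : ℕ) : (i, j) ∈ S ↔ j < (bigRows Ξ i).card := by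
  obtain ⟨hlow, hcount⟩ := hS
  have hrow : ∀ i j, i < (S.filter fun p => p.2 = j).card ↔ (i, j) ∈ S := by
    intro i j
    have hcard : ((S.filter fun p => p.2 = j).image Prod.fst).card =
        (S.filter fun p => p.2 = j).card := by
      apply Finset.card_image_of_injOn
      rintro ⟨a, b⟩ h ⟨a', b'⟩ h' hab
      simp at h h' hab
      simp [hab, h.2, h'.2]
    rw [← hcard, ← mem_iff_lt_card_of_lower]
    · simp
    · intro n hn m hm
      simp at hn ⊢
      exact hlow _ hn _ hm le_rfl
  have h1 : (bigRows Ξ i).card = (rowCounts Ξ).countP (i < ·) := by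
    rw [rowCounts, Multiset.countP_map]
    rfl
  have h2 : ((S.image Prod.snd).filter fun j => (i, j) ∈ S).card =
      (rowCountsA S).countP (i < ·) := by
    rw [rowCountsA, Multiset.countP_map]
    simp only [hrow]
    rfl
  rw [h1, ← hcount, ← h2, ← mem_iff_lt_card_of_lower]
  · simp only [Finset.mem_filter, Finset.mem_image]
    exact ⟨fun h => ⟨⟨_, h, rfl⟩, h⟩, fun h => h.2⟩
  · intro n hn m hm
    simp only [Finset.mem_filter, Finset.mem_image] at hn ⊢
    have : (i, m) ∈ S := hlow _ hn.2 _ le_rfl hm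
    exact ⟨⟨_, this, rfl⟩, this⟩

/-! ### Bivariate polynomials as polynomials in `x` over `F[y]` -/

/-- A polynomial in `x = X 0` and `y = X 1` regarded as a polynomial in `x` with coefficients in
`F[y]`. -/
noncomputable def toPoly (F : Type*) [Field F] :
    MvPolynomial (Fin 2) F →+* Polynomial (Polynomial F) :=
  MvPolynomial.eval₂Hom (Polynomial.C.comp Polynomial.C) ![Polynomial.X, Polynomial.C Polynomial.X]

lemma coeff_toPoly {F : Type*} [Field F] (g : MvPolynomial (Fin 2) F) (i j : ℕ) :
    ((toPoly F g).coeff i).coeff j = coeff (expo i j) g := by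
  classical
  induction g using MvPolynomial.induction_on' with
  | monomial d c =>
    have h : toPoly F (monomial d c) =
        Polynomial.C (Polynomial.C c * Polynomial.X ^ d 1) * Polynomial.X ^ d 0 := by
      simp only [toPoly, coe_eval₂Hom, eval₂_monomial]
      rw [Finsupp.prod_fintype _ _ (by simp)]
      simp
      ring
    have hd : d = expo i j ↔ i = d 0 ∧ j = d 1 := by
      constructor
      · rintro rfl; simp
      · rintro ⟨rfl, rfl⟩; exact (expo_eta d).symm
    rw [h, Polynomial.coeff_C_mul_X_pow, coeff_monomial, if_congr hd rfl rfl]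
    by_cases hi : i = d 0 <;> by_cases hj : j = d 1 <;>
      simp [hi, hj, Polynomial.coeff_X_pow]
  | add p q hp hq => simp [hp, hq]

/-- `Polynomial.evalEval` takes the value of the inner variable, here `y`, first. -/
lemma evalEval_toPoly {F : Type*} [Field F] (g : MvPolynomial (Fin 2) F) (ξ : F × F) :
    (toPoly F g).evalEval ξ.2 ξ.1 = evalAt ξ g := by
  have h : (Polynomial.evalEvalRingHom ξ.2 ξ.1).comp (toPoly F) =
      MvPolynomial.eval ![ξ.1, ξ.2] := by
    apply MvPolynomial.ringHom_ext
    · intro r; simp [toPoly]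
    · intro k; fin_cases k <;> simp [toPoly]
  exact DFunLike.congr_fun h g

lemma toPoly_surjective (F : Type*) [Field F] : Function.Surjective (toPoly F) := by
  intro G
  let ψ : Polynomial (Polynomial F) →+* MvPolynomial (Fin 2) F :=
    Polynomial.eval₂RingHom (Polynomial.eval₂RingHom MvPolynomial.C (X 1)) (X 0)
  have h : (toPoly F).comp ψ = RingHom.id _ := by
    apply Polynomial.ringHom_ext'
    · apply Polynomial.ringHom_ext'
      · ext r; simp [ψ, toPoly]
      · simp [ψ, toPoly]
    · simp [ψ, toPoly]
  exact ⟨ψ G, DFunLike.congr_fun h G⟩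

/-! ### Leading exponents of the vanishing ideal -/

/-- The leading coefficient in `F[y]` of an element of the vanishing ideal of degree `i` in `x`
vanishes at every row with more than `i` points, so its degree bounds the number of such rows. -/
lemma card_bigRows_le {F : Type*} [Field F] [DecidableEq F] {Ξ : Finset (F × F)} {i j : ℕ}
    (h : IsLeadExp Ξ i j) : (bigRows Ξ i).card ≤ j := by
  obtain ⟨g, hg, hd, hmax⟩ := h
  have hle : ∀ k l, ((toPoly F g).coeff k).coeff l ≠ 0 → k < i ∨ k = i ∧ l ≤ j := by
    intro k l hkl
    rw [coeff_toPoly] at hkl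
    simpa [Prod.Lex.toLex_le_toLex] using hmax _ (mem_support_iff.2 hkl)
  have hdegG : (toPoly F g).natDegree ≤ i := by
    rw [Polynomial.natDegree_le_iff_coeff_eq_zero]
    intro k hk
    ext l
    by_contra h0
    rcases hle k l h0 with h | h <;> omega
  have hdegc : ((toPoly F g).coeff i).natDegree ≤ j := by
    rw [Polynomial.natDegree_le_iff_coeff_eq_zero]
    intro l hl
    by_contra h0
    rcases hle i l h0 with h | h <;> omega
  have hroot : ∀ b ∈ bigRows Ξ i, ((toPoly F g).coeff i).eval b = 0 := by
    intro b hb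
    have hb' := (Finset.mem_filter.1 hb).2
    have hcard : ((Ξ.filter fun p => p.2 = b).image Prod.fst).card =
        (Ξ.filter fun p => p.2 = b).card := by
      apply Finset.card_image_of_injOn
      rintro ⟨a, c⟩ h ⟨a', c'⟩ h' hac
      simp at h h' hac
      simp [hac, h.2, h'.2]
    have hz : (toPoly F g).map (Polynomial.evalRingHom b) = 0 := by
      apply Polynomial.eq_zero_of_natDegree_lt_card_of_eval_eq_zero' _
        ((Ξ.filter fun p => p.2 = b).image Prod.fst)
      · intro a ha
        obtain ⟨ξ, hξ, rfl⟩ := Finset.mem_image.1 ha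
        obtain ⟨hmem, rfl⟩ := Finset.mem_filter.1 hξ
        rw [Polynomial.map_evalRingHom_eval, evalEval_toPoly, hg ξ hmem]
      · rw [hcard]
        exact (Polynomial.natDegree_map_le.trans hdegG).trans_lt hb'
    have := congrArg (fun p => Polynomial.coeff p i) hz
    simpa using this
  by_contra! hlt
  have hc0 := Polynomial.eq_zero_of_natDegree_lt_card_of_eval_eq_zero' _ (bigRows Ξ i) hroot
    (hdegc.trans_lt hlt)
  apply mem_support_iff.1 hd
  rw [← coeff_toPoly, hc0, Polynomial.coeff_zero]

/-- A polynomial monic of degree `i` in `x` that vanishes at the points of `Ξ` lying on rows with at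
most `i` points: each such row has its own univariate polynomial, monic of degree `i`, and these are
glued by Lagrange interpolation in `y`, which leaves the common leading term `x^i` untouched. -/
lemma exists_monic_vanishing {F : Type*} [Field F] [DecidableEq F] (Ξ : Finset (F × F)) (i : ℕ) :
    ∃ H : Polynomial (Polynomial F), H.Monic ∧ H.natDegree = i ∧
      ∀ ξ ∈ Ξ, ξ.2 ∉ bigRows Ξ i → H.evalEval ξ.2 ξ.1 = 0 := by
  -- the row `b` with `m ≤ i` points is killed by `x^(i-m) ∏ (x - a)`, monic of degree `i`
  let R : F → Finset F := fun b => (Ξ.filter fun p => p.2 = b).image Prod.fst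
  let P : F → Polynomial F := fun b =>
    Polynomial.X ^ (i - (R b).card) * ∏ a ∈ R b, (Polynomial.X - Polynomial.C a)
  let B := (Ξ.image Prod.snd) \ bigRows Ξ i
  have hRcard : ∀ b ∈ B, (R b).card ≤ i := by
    intro b hb
    obtain ⟨hb1, hb2⟩ := Finset.mem_sdiff.1 hb
    have : ¬ i < (Ξ.filter fun p => p.2 = b).card := fun h =>
      hb2 (Finset.mem_filter.2 ⟨hb1, h⟩)
    exact Finset.card_image_le.trans (not_lt.1 this)
  have hPm : ∀ b, (P b).Monic := fun b =>
    (Polynomial.monic_X_pow _).mul (Polynomial.monic_prod_X_sub_C _ _)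
  have hPdeg : ∀ b ∈ B, (P b).natDegree = i := by
    intro b hb
    have := hRcard b hb
    simp only [P]
    rw [(Polynomial.monic_X_pow _).natDegree_mul (Polynomial.monic_prod_X_sub_C _ _),
      Polynomial.natDegree_X_pow, Polynomial.natDegree_finsetProd_X_sub_C_eq_card]
    omega
  let r : Polynomial (Polynomial F) := ∑ b ∈ B,
    Polynomial.C (Lagrange.basis B id b) * (P b - Polynomial.X ^ i).map Polynomial.C
  have hr : r.degree < i := by
    rw [← Polynomial.mem_degreeLT]
    refine Submodule.sum_mem _ fun b hb => ?_
    rw [Polynomial.mem_degreeLT, ← Polynomial.smul_eq_C_mul]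
    refine (Polynomial.degree_smul_le _ _).trans_lt (Polynomial.degree_map_le.trans_lt ?_)
    have hd : (P b).degree = i := by
      rw [Polynomial.degree_eq_natDegree (hPm b).ne_zero, hPdeg b hb]
    rw [← hd]
    exact Polynomial.degree_sub_lt_left (by rw [hd, Polynomial.degree_X_pow]) (hPm b).ne_zero
      (by rw [(hPm b).leadingCoeff, (Polynomial.monic_X_pow i).leadingCoeff])
  refine ⟨Polynomial.X ^ i + r, Polynomial.monic_X_pow_add hr, ?_, ?_⟩
  · rw [Polynomial.natDegree_add_eq_left_of_degree_lt (by simpa using hr),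
      Polynomial.natDegree_X_pow]
  · intro ξ hξ hbig
    have hB : ξ.2 ∈ B := Finset.mem_sdiff.2 ⟨Finset.mem_image_of_mem _ hξ, hbig⟩
    have hrξ : r.evalEval ξ.2 ξ.1 = (P ξ.2 - Polynomial.X ^ i).eval ξ.1 := by
      simp only [r]
      rw [Polynomial.evalEval_finsetSum, Finset.sum_eq_single ξ.2]
      · have : (Lagrange.basis B id ξ.2).eval ξ.2 = 1 :=
          Lagrange.eval_basis_self (v := id) (Function.injective_id.injOn) hB
        rw [Polynomial.evalEval_mul, Polynomial.evalEval_C, Polynomial.evalEval_map_C, this,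
          one_mul]
      · intro b _ hb
        have : (Lagrange.basis B id b).eval ξ.2 = 0 :=
          Lagrange.eval_basis_of_ne (v := id) hb hB
        rw [Polynomial.evalEval_mul, Polynomial.evalEval_C, this, zero_mul]
      · exact fun h => (h hB).elim
    have hP0 : (P ξ.2).eval ξ.1 = 0 := by
      have : ξ.1 ∈ R ξ.2 :=
        Finset.mem_image_of_mem _ (Finset.mem_filter.2 ⟨hξ, rfl⟩)
      simp only [P, Polynomial.eval_mul, Polynomial.eval_prod]
      rw [Finset.prod_eq_zero this (by simp), mul_zero]
    rw [Polynomial.evalEval_add, hrξ, Polynomial.eval_sub, hP0]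
    simp

/-- The leading exponent is attained by `∏ (y - b)`, over the rows `b` with more than `i` points,
times a polynomial monic of degree `i` in `x` that vanishes on the other rows. -/
lemma isLeadExp_card_bigRows {F : Type*} [Field F] [DecidableEq F] (Ξ : Finset (F × F)) (i : ℕ) :
    IsLeadExp Ξ i (bigRows Ξ i).card := by
  obtain ⟨H, hHm, hHd, hH0⟩ := exists_monic_vanishing Ξ i
  let c : Polynomial F := ∏ b ∈ bigRows Ξ i, (Polynomial.X - Polynomial.C b)
  have hcm : c.Monic := Polynomial.monic_prod_X_sub_C _ _
  have hcd : c.natDegree = (bigRows Ξ i).card :=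
    Polynomial.natDegree_finsetProd_X_sub_C_eq_card _ _
  obtain ⟨g, hg⟩ := toPoly_surjective F (Polynomial.C c * H)
  have hcoeff : ∀ k l, coeff (expo k l) g = (c * H.coeff k).coeff l := by
    intro k l
    rw [← coeff_toPoly, hg, Polynomial.coeff_C_mul]
  have hHi : H.coeff i = 1 := by rw [← hHd]; exact hHm
  refine ⟨g, fun ξ hξ => ?_, ?_, fun e he => ?_⟩
  · rw [← evalEval_toPoly, hg, Polynomial.evalEval_mul, Polynomial.evalEval_C]
    by_cases hb : ξ.2 ∈ bigRows Ξ i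
    · have : c.eval ξ.2 = 0 := by
        simp only [c, Polynomial.eval_prod]
        exact Finset.prod_eq_zero hb (by simp)
      rw [this, zero_mul]
    · rw [hH0 ξ hξ hb, mul_zero]
  · rw [mem_support_iff, hcoeff, hHi, mul_one, ← hcd]
    exact hcm.coeff_natDegree.trans_ne one_ne_zero
  · rw [mem_support_iff, ← expo_eta e, hcoeff] at he
    have h0 : e 0 ≤ i := by
      by_contra! h
      rw [Polynomial.coeff_eq_zero_of_natDegree_lt (hHd.trans_lt h)] at he
      simp at he
    rw [Prod.Lex.toLex_le_toLex]
    rcases h0.lt_or_eq with h | h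
    · exact Or.inl h
    · refine Or.inr ⟨h, ?_⟩
      rw [h, hHi, mul_one] at he
      exact hcd ▸ Polynomial.le_natDegree_of_ne_zero he

/-- The monomial-spanned degree reducing interpolation space
w.r.t. `≺_lex` is unique; consequently `{x^i y^j : (i,j) ∈ S_x(Ξ)}` is the Gröbner
éscalier of `I(Ξ)` w.r.t. `≺_lex`. -/
theorem unique_degree_reducing_monomial_space_lex {F : Type*} [Field F] [DecidableEq F]
    (Ξ : Finset (F × F)) (S : Finset (ℕ × ℕ)) (hS : IsSx Ξ S) :
    (∀ A B : Finset (ℕ × ℕ), IsDegreeReducingLex Ξ A → IsDegreeReducingLex Ξ B → A = B) ∧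
      ∀ i j : ℕ, (i, j) ∈ S ↔
        ¬ ∃ g ∈ vanishingIdeal F Ξ, g ≠ 0 ∧ ∃ d ∈ g.support,
          (∀ e ∈ g.support, toLex ((e 0 : ℕ), (e 1 : ℕ)) ≤ toLex ((d 0 : ℕ), (d 1 : ℕ))) ∧
          d 0 ≤ i ∧ d 1 ≤ j := by
  constructor
  · intro A B hA hB
    ext ⟨i, j⟩
    rw [mem_iff_of_isDegreeReducingLex hA, mem_iff_of_isDegreeReducingLex hB]
  · intro i j
    constructor
    · rintro hij ⟨g, hg, -, d, hd, hmax, hi, hj⟩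
      have hlead : IsLeadExp Ξ (d 0) (d 1) :=
        ⟨g, mem_vanishingIdeal.1 hg, by rwa [expo_eta], hmax⟩
      have hdS : (d 0, d 1) ∈ S := hS.1 _ hij _ hi hj
      exact absurd (card_bigRows_le hlead)
        (not_le.2 ((mem_iff_lt_card_bigRows hS _ _).1 hdS))
    · intro hn
      by_contra hij
      rw [mem_iff_lt_card_bigRows hS, not_lt] at hij
      obtain ⟨g, hg, hd, hmax⟩ := isLeadExp_card_bigRows Ξ i
      refine hn ⟨g, mem_vanishingIdeal.2 hg, ?_, _, hd, ?_, ?_, ?_⟩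
      · rintro rfl
        simp at hd
      · simpa using hmax
      · simp
      · simpa using hij
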